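/- arXiv:0810.1386 — 2 statements merged into one kernel-verified Lean document; each statement's English description precedes it below -/
import Mathlib

section
/- Let L : ℝⁿ × ℝⁿ → ℝ be C², f_L : ℝⁿ × ℝⁿ × ℝᵐ → ℝⁿ continuous, and let φ : ℝ × ℝⁿ → ℝⁿ be a smooth one-parameter group of diffeomorphisms of ℝⁿ with infinitesimal generator ξ_Q(q) = ∂_s φ(s,q)|_{s=0}, and suppose L(φ(s,q), D_qφ(s,q)·v) = L(q,v) for all s, q, v. Then for every C² solution q : [0,T] → ℝⁿ of the forced Euler–Lagrange equations with continuous control u : [0,T] → ℝᵐ, the evolution of the momentum map satisfies D₂L(q(T),q̇(T)) · ξ_Q(q(T)) − D₂L(q(0),q̇(0)) · ξ_Q(q(0)) = ∫₀ᵀ f_L(q(t),q̇(t),u(t)) · ξ_Q(q(t)) dt. -/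
open scoped RealInnerProductSpace

noncomputable section

abbrev Evec (n : ℕ) := EuclideanSpace ℝ (Fin n)

/-!
Differentiating the invariance of `L` under `φ` at `s = 0` and exchanging `∂ₛ` with `D_q` gives
`D₁L(x, v) · ξ x + D₂L(x, v) · (Dξ(x) v) = 0`. Along a solution `q` with momentum
`p = D₂L(q, q̇)`, the product rule for `⟪p, ξ(q)⟫` produces `⟪ṗ, ξ(q)⟫ + ⟪p, Dξ(q) q̇⟫`. The
equation of motion `ṗ = D₁L + F` turns this into the infinitesimal invariance plus the power
`⟪F, ξ(q)⟫`, and integrating in time gives the claim.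
-/

open scoped Gradient Topology

section PartialDerivatives

variable {𝕜 E F G : Type*} [NontriviallyNormedField 𝕜] [NormedAddCommGroup E] [NormedSpace 𝕜 E]
  [NormedAddCommGroup F] [NormedSpace 𝕜 F] [NormedAddCommGroup G] [NormedSpace 𝕜 G]
  {f : E × F → G} {x : E} {y : F}

theorem fderiv_comp_prodMk_left_apply (hf : DifferentiableAt 𝕜 f (x, y)) (v : E) :
    fderiv 𝕜 (fun x' => f (x', y)) x v = fderiv 𝕜 f (x, y) (v, 0) := by
  have hslice := hf.hasFDerivAt.comp (f := (·, y)) x (hasFDerivAt_prodMk_left x y)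
  exact congrArg (· v) hslice.fderiv

theorem fderiv_comp_prodMk_right_apply (hf : DifferentiableAt 𝕜 f (x, y)) (w : F) :
    fderiv 𝕜 (fun y' => f (x, y')) y w = fderiv 𝕜 f (x, y) (0, w) := by
  have hslice := hf.hasFDerivAt.comp (f := (x, ·)) y (hasFDerivAt_prodMk_right x y)
  exact congrArg (· w) hslice.fderiv

theorem fderiv_prod_apply_eq_add (hf : DifferentiableAt 𝕜 f (x, y)) (v : E) (w : F) :
    fderiv 𝕜 f (x, y) (v, w) =
      fderiv 𝕜 (fun x' => f (x', y)) x v + fderiv 𝕜 (fun y' => f (x, y')) y w := by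
  rw [fderiv_comp_prodMk_left_apply hf, fderiv_comp_prodMk_right_apply hf, ← map_add]
  simp

end PartialDerivatives

section MixedDerivatives

variable {𝕜 E F : Type*} [RCLike 𝕜] [NormedAddCommGroup E] [NormedSpace 𝕜 E]
  [NormedAddCommGroup F] [NormedSpace 𝕜 F]

theorem hasDerivAt_fderiv_comp_prodMk {φ : 𝕜 × E → F} (hφ : ContDiff 𝕜 2 φ) (s : 𝕜) (x v : E) :
    HasDerivAt (fun r => fderiv 𝕜 (fun y => φ (r, y)) x v)
      (fderiv 𝕜 (fun y => deriv (fun r => φ (r, y)) s) x v) s := by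
  have hφ_diff : Differentiable 𝕜 φ := hφ.differentiable (by norm_num)
  have hDφ_diff : Differentiable 𝕜 (fderiv 𝕜 φ) :=
    (hφ.fderiv_right (m := 1) (by norm_num)).differentiable (by norm_num)
  have hDφ_apply (w : 𝕜 × E) : DifferentiableAt 𝕜 (fun z => fderiv 𝕜 φ z w) (s, x) :=
    (hDφ_diff _).clm_apply (differentiableAt_const w)
  have fderiv_Dφ_apply (w z : 𝕜 × E) :
      fderiv 𝕜 (fun p => fderiv 𝕜 φ p w) (s, x) z = fderiv 𝕜 (fderiv 𝕜 φ) (s, x) z w := by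
    simp [fderiv_clm_apply (hDφ_diff (s, x)) (differentiableAt_const w)]
  have space_slice (r : 𝕜) : fderiv 𝕜 (fun y => φ (r, y)) x v = fderiv 𝕜 φ (r, x) (0, v) :=
    fderiv_comp_prodMk_right_apply (hφ_diff _) v
  have time_slice (y : E) : deriv (fun r => φ (r, y)) s = fderiv 𝕜 φ (s, y) (1, 0) :=
    fderiv_comp_prodMk_left_apply (hφ_diff _) 1
  have symm : fderiv 𝕜 (fderiv 𝕜 φ) (s, x) (1, 0) (0, v) =
      fderiv 𝕜 (fderiv 𝕜 φ) (s, x) (0, v) (1, 0) :=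
    (hφ.contDiffAt.isSymmSndFDerivAt (by simp)).eq _ _
  simp only [space_slice, time_slice]
  rw [fderiv_comp_prodMk_right_apply (hDφ_apply (1, 0)), fderiv_Dφ_apply, ← symm,
    ← fderiv_Dφ_apply, ← fderiv_comp_prodMk_left_apply (hDφ_apply (0, v))]
  exact ((hDφ_apply (0, v)).comp (f := (·, x)) s (by fun_prop)).hasDerivAt

end MixedDerivatives

section InfinitesimalSymmetry

variable {E : Type*} [NormedAddCommGroup E] [NormedSpace ℝ E]

/-- The infinitesimal generator `x ↦ ∂ₛ φ(s, x)` at `s = 0` of a family `φ(s, ·)` of self-maps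
of `E`. -/
def infinitesimalGenerator (φ : ℝ × E → E) (x : E) : E :=
  deriv (fun s => φ (s, x)) 0

theorem contDiff_infinitesimalGenerator {φ : ℝ × E → E} {n : WithTop ℕ∞}
    (hφ : ContDiff ℝ (n + 1) φ) : ContDiff ℝ n (infinitesimalGenerator φ) :=
  ContDiff.fderiv_apply (f := fun x s => φ (s, x)) (hφ.comp (contDiff_snd.prodMk contDiff_fst))
    contDiff_const contDiff_const le_rfl

/-- The vector field `ξ` is an infinitesimal symmetry of the Lagrangian `L`: the derivative of `L`
along the complete lift `(x, v) ↦ (ξ x, Dξ(x) v)` of `ξ` to the tangent bundle vanishes. -/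
def IsInfinitesimalSymmetry (L : E × E → ℝ) (ξ : E → E) : Prop :=
  ∀ x v, fderiv ℝ L (x, v) (ξ x, fderiv ℝ ξ x v) = 0

theorem isInfinitesimalSymmetry_infinitesimalGenerator {L : E × E → ℝ} {φ : ℝ × E → E}
    (hL : Differentiable ℝ L) (hφ : ContDiff ℝ 2 φ) (hφ_zero : ∀ x, φ (0, x) = x)
    (hinv : ∀ x v, ∀ᶠ s in 𝓝 0, L (φ (s, x), fderiv ℝ (fun y => φ (s, y)) x v) = L (x, v)) :
    IsInfinitesimalSymmetry L (infinitesimalGenerator φ) := by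
  intro x v
  have hφ_diff : Differentiable ℝ φ := hφ.differentiable (by norm_num)
  have hbase : HasDerivAt (fun s => φ (s, x)) (infinitesimalGenerator φ x) 0 :=
    ((hφ_diff _).comp (f := (·, x)) 0 (by fun_prop)).hasDerivAt
  have hlift := hbase.prodMk (hasDerivAt_fderiv_comp_prodMk hφ 0 x v)
  have hlift_zero : (φ (0, x), fderiv ℝ (fun y => φ (0, y)) x v) = (x, v) := by simp [hφ_zero]
  have hL_lift := (hL _).hasFDerivAt.comp_hasDerivAt 0 hlift
  rw [hlift_zero] at hL_lift
  exact hL_lift.unique ((hasDerivAt_const 0 (L (x, v))).congr_of_eventuallyEq (hinv x v))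

end InfinitesimalSymmetry

section ForcedEulerLagrange

variable {E : Type*} [NormedAddCommGroup E] [InnerProductSpace ℝ E] [CompleteSpace E]
  {L : E × E → ℝ} {ξ : E → E} {q : ℝ → E}

/-- The conjugate momentum `D₂L(x, v)`, encoded as a vector of `E` through the Riesz isomorphism. -/
def conjugateMomentum (L : E × E → ℝ) (x v : E) : E :=
  ∇ (fun w => L (x, w)) v

/-- The momentum map `D₂L(x, v) · ξ(x)` of the Lagrangian `L` paired with the vector field `ξ`. -/
def momentumMap (L : E × E → ℝ) (ξ : E → E) (x v : E) : ℝ :=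
  ⟪conjugateMomentum L x v, ξ x⟫

/-- The Euler–Lagrange equation for `L` along the curve `q` at time `t`, with external force `F`;
`F` is the value of the force at that instant, so any dependence on state or control is allowed. -/
def ForcedEulerLagrangeAt (L : E × E → ℝ) (q : ℝ → E) (F : E) (t : ℝ) : Prop :=
  ∇ (fun x => L (x, deriv q t)) (q t)
    - deriv (fun s => conjugateMomentum L (q s) (deriv q s)) t + F = 0

theorem contDiff_conjugateMomentum_comp {X : Type*} [NormedAddCommGroup X] [NormedSpace ℝ X]
    {x v : X → E} {n : WithTop ℕ∞} (hL : ContDiff ℝ (n + 1) L) (hx : ContDiff ℝ (n + 1) x)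
    (hv : ContDiff ℝ n v) : ContDiff ℝ n fun t => conjugateMomentum L (x t) (v t) := by
  have hfiber : ContDiff ℝ n fun t => fderiv ℝ (fun w => L (x t, w)) (v t) :=
    ContDiff.fderiv (f := fun t w => L (x t, w))
      (hL.comp ((hx.comp contDiff_fst).prodMk contDiff_snd)) hv le_rfl
  exact (InnerProductSpace.toDual ℝ E).symm.contDiff.comp hfiber

theorem hasDerivAt_momentumMap_of_forcedEulerLagrangeAt {F : E} {t : ℝ}
    (hL : DifferentiableAt ℝ L (q t, deriv q t)) (hξ : DifferentiableAt ℝ ξ (q t))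
    (hsymm : IsInfinitesimalSymmetry L ξ) (hq : DifferentiableAt ℝ q t)
    (hp : DifferentiableAt ℝ (fun s => conjugateMomentum L (q s) (deriv q s)) t)
    (hEL : ForcedEulerLagrangeAt L q F t) :
    HasDerivAt (fun s => momentumMap L ξ (q s) (deriv q s)) ⟪F, ξ (q t)⟫ t := by
  have hξq : HasDerivAt (fun s => ξ (q s)) (fderiv ℝ ξ (q t) (deriv q t)) t :=
    hξ.hasFDerivAt.comp_hasDerivAt t hq.hasDerivAt
  refine (hp.hasDerivAt.inner ℝ hξq).congr_deriv ?_
  have newton : deriv (fun s => conjugateMomentum L (q s) (deriv q s)) t =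
      ∇ (fun x => L (x, deriv q t)) (q t) + F := by
    rw [← sub_eq_zero, ← neg_eq_zero, ← hEL]
    abel
  have invariance : ⟪∇ (fun x => L (x, deriv q t)) (q t), ξ (q t)⟫
      + ⟪conjugateMomentum L (q t) (deriv q t), fderiv ℝ ξ (q t) (deriv q t)⟫ = 0 := by
    rw [conjugateMomentum, inner_gradient_left, inner_gradient_left,
      ← fderiv_prod_apply_eq_add hL, hsymm]
  rw [newton, inner_add_left]
  linarith

theorem stmt_3_general {F : ℝ → E} {a b : ℝ} (hL : ContDiff ℝ 2 L) (hξ : ContDiff ℝ 1 ξ)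
    (hsymm : IsInfinitesimalSymmetry L ξ) (hq : ContDiff ℝ 2 q)
    (hEL : ∀ t ∈ Set.uIcc a b, ForcedEulerLagrangeAt L q (F t) t) :
    momentumMap L ξ (q b) (deriv q b) - momentumMap L ξ (q a) (deriv q a) =
      ∫ t in a..b, ⟪F t, ξ (q t)⟫ := by
  have hp : ContDiff ℝ 1 fun t => conjugateMomentum L (q t) (deriv q t) :=
    contDiff_conjugateMomentum_comp hL hq (ContDiff.deriv' hq)
  have hJ : ContDiff ℝ 1 fun t => momentumMap L ξ (q t) (deriv q t) :=
    hp.inner ℝ (hξ.comp (hq.of_le one_le_two))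
  have power_eq_deriv : Set.EqOn (fun t => ⟪F t, ξ (q t)⟫)
      (deriv fun t => momentumMap L ξ (q t) (deriv q t)) (Set.uIcc a b) := fun t ht =>
    (hasDerivAt_momentumMap_of_forcedEulerLagrangeAt (hL.differentiable two_ne_zero _)
      (hξ.differentiable one_ne_zero _) hsymm (hq.differentiable two_ne_zero _)
      (hp.differentiable one_ne_zero _) (hEL t ht)).deriv.symm
  rw [intervalIntegral.integral_congr power_eq_deriv,
    intervalIntegral.integral_deriv_of_contDiffOn_uIcc hJ.contDiffOn]

end ForcedEulerLagrange

/-- Evolution of the momentum map under forcing: the change of the momentum map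
along a solution of the forced Euler–Lagrange equations equals the integral of
the virtual work of the force on the infinitesimal generator. -/
theorem stmt_3 {n m : ℕ} (T : ℝ) (hT : 0 < T)
    (L : Evec n × Evec n → ℝ) (hL : ContDiff ℝ 2 L)
    (fL : Evec n × Evec n × Evec m → Evec n) (hfL : Continuous fL)
    (φ : ℝ × Evec n → Evec n) (hφ : ContDiff ℝ (⊤ : ℕ∞) φ)
    (hφ0 : ∀ x, φ (0, x) = x)
    (hφgrp : ∀ s t : ℝ, ∀ x, φ (s + t, x) = φ (s, φ (t, x)))
    (ξ : Evec n → Evec n) (hξ : ∀ x, ξ x = deriv (fun s => φ (s, x)) 0)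
    (hinv : ∀ (s : ℝ) (x v : Evec n),
      L (φ (s, x), fderiv ℝ (fun y => φ (s, y)) x v) = L (x, v))
    (u : ℝ → Evec m) (hu : Continuous u)
    (q : ℝ → Evec n) (hq : ContDiff ℝ 2 q)
    (hEL : ∀ t ∈ Set.Icc (0:ℝ) T,
      gradient (fun x => L (x, deriv q t)) (q t)
        - deriv (fun s => gradient (fun v => L (q s, v)) (deriv q s)) t
        + fL (q t, deriv q t, u t) = 0) :
    ⟪gradient (fun v => L (q T, v)) (deriv q T), ξ (q T)⟫
      - ⟪gradient (fun v => L (q 0, v)) (deriv q 0), ξ (q 0)⟫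
      = ∫ t in (0:ℝ)..T, ⟪fL (q t, deriv q t, u t), ξ (q t)⟫ := by
  obtain rfl : ξ = infinitesimalGenerator φ := funext hξ
  have hφ_two : ContDiff ℝ 2 φ := contDiff_infty.mp hφ 2
  have hsymm := isInfinitesimalSymmetry_infinitesimalGenerator (hL.differentiable two_ne_zero)
    hφ_two hφ0 fun x v => .of_forall fun s => hinv s x v
  exact stmt_3_general hL (contDiff_infinitesimalGenerator hφ_two) hsymm hq
    (by rwa [Set.uIcc_of_le hT.le])
end
end

section
/- Let h > 0, let L : ℝⁿ × ℝⁿ → ℝ be C², let f_L : ℝⁿ × ℝⁿ × ℝᵐ → ℝⁿ be continuous, and let u : [0,h] → ℝᵐ be continuous. Let V ⊆ ℝⁿ × ℝⁿ be open and let 𝒬 : V × [0,h] → ℝⁿ be C² such that for each (q₀,q₁) ∈ V, the curve t ↦ 𝒬(q₀,q₁,t) solves the forced Euler–Lagrange equations for (L, f_L, u) and satisfies 𝒬(q₀,q₁,0) = q₀ and 𝒬(q₀,q₁,h) = q₁. Define the exact discrete Lagrangian L_d^E(q₀,q₁) = ∫₀ʰ L(𝒬(q₀,q₁,t), 𝒬̇(q₀,q₁,t))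 dt and the exact left discrete force f_d^{E+}(q₀,q₁) = ∫₀ʰ (∂𝒬/∂q₁(q₀,q₁,t))ᵀ · f_L(𝒬(q₀,q₁,t), 𝒬̇(q₀,q₁,t), u(t)) dt, where 𝒬̇ denotes ∂𝒬/∂t. Then for all (q₀,q₁) ∈ V: D₂L_d^E(q₀,q₁) + f_d^{E+}(q₀,q₁) = D₂L(𝒬(q₀,q₁,h), 𝒬̇(q₀,q₁,h)), i.e. the exact forced discrete Legendre transform 𝔽^{f+}L_d^E agrees with the continuous Legendre transform 𝔽L evaluated at the final point of the solution curve. -/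
open scoped RealInnerProductSpace

noncomputable section

/-!
Let `φ (z, t)` be a family of curves depending on a parameter `z`, let `p = ∂L/∂v` be the momentum
along the curve at `z`, and let `δφ = ∂φ/∂z · w`. The parameter and time derivatives of `φ` commute,
so the forced Euler–Lagrange equation `∂L/∂q - ṗ + f = 0` turns `d/dt ⟪p, δφ⟫` into
`∂/∂z L(φ, φ̇) · w + ⟪f, δφ⟫`. Integrating over time gives the first variation of the action in
terms of the boundary values of `⟪p, δφ⟫` and the work of `f`. When the parameter is the final
point of the curve, `∂φ/∂z` is `0` at the initial time and the identity at the final time, so `p`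
at the final time is the only boundary term left.
-/

open ContinuousLinearMap Filter MeasureTheory Set Topology

section PartialDerivatives

variable {𝕜 E G X : Type*} [NontriviallyNormedField 𝕜] [NormedAddCommGroup E] [NormedSpace 𝕜 E]
  [NormedAddCommGroup G] [NormedSpace 𝕜 G] [NormedAddCommGroup X] [NormedSpace 𝕜 X]

theorem hasFDerivAt_comp_prodMk_left {φ : E × G → X} {z : E} {t : G}
    (hφ : DifferentiableAt 𝕜 φ (z, t)) :
    HasFDerivAt (fun y => φ (y, t)) ((fderiv 𝕜 φ (z, t)).comp (inl 𝕜 E G)) z :=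
  hφ.hasFDerivAt.comp z (hasFDerivAt_prodMk_left z t)

theorem hasFDerivAt_comp_prodMk_right {φ : E × G → X} {z : E} {t : G}
    (hφ : DifferentiableAt 𝕜 φ (z, t)) :
    HasFDerivAt (fun τ => φ (z, τ)) ((fderiv 𝕜 φ (z, t)).comp (inr 𝕜 E G)) t :=
  hφ.hasFDerivAt.comp t (hasFDerivAt_prodMk_right z t)

theorem hasDerivAt_comp_prodMk_right {φ : E × 𝕜 → X} {z : E} {t : 𝕜}
    (hφ : DifferentiableAt 𝕜 φ (z, t)) :
    HasDerivAt (fun τ => φ (z, τ)) (fderiv 𝕜 φ (z, t) (0, 1)) t :=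
  (hasFDerivAt_comp_prodMk_right hφ).hasDerivAt

theorem contDiff_fderiv_comp_prodMk_left {φ : E × G → X} {k l : WithTop ℕ∞}
    (hφ : ContDiff 𝕜 l φ) (hkl : k + 1 ≤ l) :
    ContDiff 𝕜 k fun p : E × G => fderiv 𝕜 (fun y => φ (y, p.2)) p.1 :=
  ContDiff.fderiv (f := fun (p : E × G) y => φ (y, p.2)) (hφ.comp (by fun_prop))
    contDiff_fst hkl

theorem continuous_fderiv_comp_prodMk_left {φ : E × G → X} (hφ : ContDiff 𝕜 1 φ) (z : E) :
    Continuous fun t => fderiv 𝕜 (fun y => φ (y, t)) z :=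
  (contDiff_fderiv_comp_prodMk_left hφ (k := 0) (by norm_num)).continuous.comp (.prodMk_right z)

theorem contDiff_deriv_comp_prodMk_right {φ : E × 𝕜 → X} {k l : WithTop ℕ∞}
    (hφ : ContDiff 𝕜 l φ) (hkl : k + 1 ≤ l) :
    ContDiff 𝕜 k fun p : E × 𝕜 => deriv (fun τ => φ (p.1, τ)) p.2 :=
  ContDiff.fderiv_apply (f := fun (p : E × 𝕜) τ => φ (p.1, τ)) (hφ.comp (by fun_prop))
    contDiff_snd contDiff_const hkl

end PartialDerivatives

theorem exists_eventually_forall_mem_norm_le {Z T X : Type*} [TopologicalSpace Z]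
    [TopologicalSpace T] [SeminormedAddCommGroup X] {g : Z × T → X} (hg : Continuous g)
    {K : Set T} (hK : IsCompact K) (z : Z) : ∃ C, ∀ᶠ y in 𝓝 z, ∀ t ∈ K, ‖g (y, t)‖ ≤ C := by
  obtain ⟨C, hC⟩ := hK.exists_bound_of_continuousOn (f := fun t => g (z, t)) (by fun_prop)
  refine ⟨C + 1, hK.eventually_forall_of_forall_eventually fun t ht => ?_⟩
  have near : ∀ᶠ p in 𝓝 (z, t), ‖g p‖ < C + 1 :=
    hg.norm.continuousAt.eventually_lt_const ((hC t ht).trans_lt (lt_add_one C))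
  exact near.mono fun _ => le_of_lt

section CurveFamilies

variable {E X : Type*} [NormedAddCommGroup E] [NormedSpace ℝ E]
  [NormedAddCommGroup X] [NormedSpace ℝ X] {φ : E × ℝ → X}

theorem hasDerivAt_fderiv_comp_prodMk_left_apply (hφ : ContDiff ℝ 2 φ) (z w : E) (t : ℝ) :
    HasDerivAt (fun s => fderiv ℝ (fun y => φ (y, s)) z w)
      (fderiv ℝ (fun y => deriv (fun τ => φ (y, τ)) t) z w) t := by
  have φ_diff : Differentiable ℝ φ := hφ.differentiable two_ne_zero
  have dφ_diff : Differentiable ℝ (fderiv ℝ φ) :=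
    (hφ.fderiv_right (m := 1) (by norm_num)).differentiable one_ne_zero
  have time_deriv : HasDerivAt (fun s => fderiv ℝ φ (z, s) (w, 0))
      (fderiv ℝ (fderiv ℝ φ) (z, t) (0, 1) (w, 0)) t := by
    simpa using (hasDerivAt_comp_prodMk_right (dφ_diff (z, t))).clm_apply
      (hasDerivAt_const t (w, (0 : ℝ)))
  have param_deriv : fderiv ℝ (fun y => fderiv ℝ φ (y, t) (0, 1)) z w
      = fderiv ℝ (fderiv ℝ φ) (z, t) (w, 0) (0, 1) := by
    rw [((hasFDerivAt_comp_prodMk_left (dφ_diff (z, t))).clm_apply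
      (hasFDerivAt_const ((0 : E), (1 : ℝ)) z)).fderiv]
    simp
  have symm : IsSymmSndFDerivAt ℝ φ (z, t) := hφ.contDiffAt.isSymmSndFDerivAt (by simp)
  simp only [(hasFDerivAt_comp_prodMk_left (φ_diff _)).fderiv,
    (hasDerivAt_comp_prodMk_right (φ_diff _)).deriv, comp_apply, inl_apply, param_deriv]
  rwa [← symm.eq]

theorem hasFDerivAt_intervalIntegral_of_contDiff (hφ : ContDiff ℝ 1 φ) (a b : ℝ) (z : E) :
    HasFDerivAt (fun y => ∫ t in a..b, φ (y, t))
      (∫ t in a..b, fderiv ℝ (fun y => φ (y, t)) z) z := by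
  have φ_cont : Continuous φ := hφ.continuous
  have dφ_cont : Continuous fun p : E × ℝ => fderiv ℝ (fun y => φ (y, p.2)) p.1 :=
    (contDiff_fderiv_comp_prodMk_left hφ (k := 0) (by norm_num)).continuous
  obtain ⟨C, hC⟩ := exists_eventually_forall_mem_norm_le dφ_cont isCompact_uIcc z
  refine intervalIntegral.hasFDerivAt_integral_of_dominated_of_fderiv_le
    (F' := fun y t => fderiv ℝ (fun y => φ (y, t)) y) (bound := fun _ => C) hC
    (.of_forall fun y => ?_) ?_ (continuous_fderiv_comp_prodMk_left hφ z).aestronglyMeasurable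
    (.of_forall fun t ht y hy => hy t (uIoc_subset_uIcc ht)) intervalIntegrable_const
    (.of_forall fun t _ y _ => ?_)
  · exact (φ_cont.comp (.prodMk_right y)).aestronglyMeasurable
  · exact (φ_cont.comp (.prodMk_right z)).intervalIntegrable a b
  · have φ_diff : DifferentiableAt ℝ φ (y, t) := hφ.differentiable one_ne_zero (y, t)
    exact (hasFDerivAt_comp_prodMk_left φ_diff).differentiableAt.hasFDerivAt

/-- The action `∫ₐᵇ L(q, q̇) dt` of the curve `q`. -/
def action (L : X × X → ℝ) (a b : ℝ) (q : ℝ → X) : ℝ :=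
  ∫ t in a..b, L (q t, deriv q t)

variable {L : X × X → ℝ}

theorem contDiff_lagrangian_family {k l : WithTop ℕ∞} (hL : ContDiff ℝ k L) (hφ : ContDiff ℝ l φ)
    (hkl : k + 1 ≤ l) :
    ContDiff ℝ k fun p : E × ℝ => L (φ p, deriv (fun τ => φ (p.1, τ)) p.2) :=
  hL.comp ((hφ.of_le (le_self_add.trans hkl)).prodMk (contDiff_deriv_comp_prodMk_right hφ hkl))

theorem hasFDerivAt_action (hL : ContDiff ℝ 1 L) (hφ : ContDiff ℝ 2 φ) (a b : ℝ) (z : E) :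
    HasFDerivAt (fun y => action L a b fun τ => φ (y, τ))
      (∫ t in a..b, fderiv ℝ (fun y => L (φ (y, t), deriv (fun τ => φ (y, τ)) t)) z) z :=
  hasFDerivAt_intervalIntegral_of_contDiff
    (contDiff_lagrangian_family hL hφ (by norm_num)) a b z

end CurveFamilies

section Mechanics

variable {F : Type*} [NormedAddCommGroup F] [InnerProductSpace ℝ F] [CompleteSpace F]

theorem fderiv_prod_apply_eq_inner_gradient_add {G : Type*} [NormedAddCommGroup G]
    [InnerProductSpace ℝ G] [CompleteSpace G] {g : F × G → ℝ} {q : F} {v : G}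
    (hg : DifferentiableAt ℝ g (q, v)) (δq : F) (δv : G) :
    fderiv ℝ g (q, v) (δq, δv)
      = ⟪gradient (fun y => g (y, v)) q, δq⟫ + ⟪gradient (fun y => g (q, y)) v, δv⟫ := by
  rw [inner_gradient_left, inner_gradient_left, (hasFDerivAt_comp_prodMk_left hg).fderiv,
    (hasFDerivAt_comp_prodMk_right hg).fderiv, comp_apply, comp_apply, ← map_add]
  simp

/-- The momentum `∂L/∂v` along the curve `q`, that is, the Legendre transform of `L` evaluated at
`(q t, q̇ t)`, identified with a vector by the inner product. -/
def momentum (L : F × F → ℝ) (q : ℝ → F) (t : ℝ) : F :=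
  gradient (fun v => L (q t, v)) (deriv q t)

/-- The curve `q` solves on `s` the Euler–Lagrange equations of `L` with force `f`, the latter being
given as a function of time (a force law has to be evaluated along `q` first). -/
def IsForcedMotionOn (L : F × F → ℝ) (f q : ℝ → F) (s : Set ℝ) : Prop :=
  ∀ t ∈ s, gradient (fun y => L (y, deriv q t)) (q t) - deriv (momentum L q) t + f t = 0

variable {L : F × F → ℝ}

theorem contDiff_momentum {k l : WithTop ℕ∞} (hL : ContDiff ℝ l L) {q : ℝ → F}
    (hq : ContDiff ℝ l q) (hkl : k + 1 ≤ l) : ContDiff ℝ k (momentum L q) := by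
  have dq_contDiff : ContDiff ℝ k (deriv q) :=
    ContDiff.fderiv_apply (f := fun _ => q) (hq.comp contDiff_snd) contDiff_id contDiff_const hkl
  have dL : ContDiff ℝ k fun t => fderiv ℝ (fun v => L (q t, v)) (deriv q t) :=
    ContDiff.fderiv (f := fun t v => L (q t, v))
      (hL.comp ((hq.comp contDiff_fst).prodMk contDiff_snd)) dq_contDiff hkl
  exact (InnerProductSpace.toDual ℝ F).symm.contDiff.comp dL

section FirstVariation

variable {E : Type*} [NormedAddCommGroup E] {φ : E × ℝ → F} {f : ℝ → F} {z : E} {a b : ℝ}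

section NormedSpace

variable [NormedSpace ℝ E]

theorem fderiv_lagrangian_family_apply (hL : Differentiable ℝ L) (hφ : ContDiff ℝ 2 φ)
    (z w : E) (t : ℝ) :
    fderiv ℝ (fun y => L (φ (y, t), deriv (fun τ => φ (y, τ)) t)) z w
      = ⟪gradient (fun y => L (y, deriv (fun τ => φ (z, τ)) t)) (φ (z, t)),
          fderiv ℝ (fun y => φ (y, t)) z w⟫
        + ⟪momentum L (fun τ => φ (z, τ)) t,
          fderiv ℝ (fun y => deriv (fun τ => φ (y, τ)) t) z w⟫ := by
  have position_diff : DifferentiableAt ℝ (fun y => φ (y, t)) z :=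
    (hasFDerivAt_comp_prodMk_left (hφ.differentiable two_ne_zero (z, t))).differentiableAt
  have velocity_contDiff : ContDiff ℝ 1 fun p : E × ℝ => deriv (fun τ => φ (p.1, τ)) p.2 :=
    contDiff_deriv_comp_prodMk_right hφ (by norm_num)
  have velocity_diff : DifferentiableAt ℝ (fun y => deriv (fun τ => φ (y, τ)) t) z :=
    (hasFDerivAt_comp_prodMk_left
      (velocity_contDiff.differentiable one_ne_zero (z, t))).differentiableAt
  have chain_rule :=
    (hL _).hasFDerivAt.comp z (position_diff.hasFDerivAt.prodMk velocity_diff.hasFDerivAt)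
  refine (DFunLike.congr_fun chain_rule.fderiv w).trans ?_
  exact fderiv_prod_apply_eq_inner_gradient_add (hL _) _ _

theorem hasDerivAt_inner_momentum_fderiv (hL : ContDiff ℝ 2 L) (hφ : ContDiff ℝ 2 φ) {s : Set ℝ}
    (hz : IsForcedMotionOn L f (fun τ => φ (z, τ)) s) {t : ℝ} (ht : t ∈ s) (w : E) :
    HasDerivAt (fun σ => ⟪momentum L (fun τ => φ (z, τ)) σ, fderiv ℝ (fun y => φ (y, σ)) z w⟫)
      (fderiv ℝ (fun y => L (φ (y, t), deriv (fun τ => φ (y, τ)) t)) z w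
        + ⟪f t, fderiv ℝ (fun y => φ (y, t)) z w⟫) t := by
  have curve_contDiff : ContDiff ℝ 2 fun τ => φ (z, τ) := hφ.comp (contDiff_prodMk_right z)
  have momentum_deriv : HasDerivAt (momentum L fun τ => φ (z, τ))
      (gradient (fun y => L (y, deriv (fun τ => φ (z, τ)) t)) (φ (z, t)) + f t) t := by
    have euler_lagrange : deriv (momentum L fun τ => φ (z, τ)) t
        = gradient (fun y => L (y, deriv (fun τ => φ (z, τ)) t)) (φ (z, t)) + f t := by
      rw [← sub_eq_zero, ← neg_eq_zero, ← hz t ht]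
      abel
    rw [← euler_lagrange]
    exact ((contDiff_momentum hL curve_contDiff (k := 1) (by norm_num)).differentiable
      one_ne_zero t).hasDerivAt
  refine (momentum_deriv.inner ℝ (hasDerivAt_fderiv_comp_prodMk_left_apply hφ z w t)).congr_deriv ?_
  rw [fderiv_lagrangian_family_apply (hL.differentiable two_ne_zero) hφ, inner_add_left]
  ring

theorem fderiv_action_apply (hL : ContDiff ℝ 2 L) (hφ : ContDiff ℝ 2 φ) (hf : Continuous f)
    (hz : IsForcedMotionOn L f (fun τ => φ (z, τ)) (uIcc a b)) (w : E) :
    fderiv ℝ (fun y => action L a b fun τ => φ (y, τ)) z w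
      = ⟪momentum L (fun τ => φ (z, τ)) b, fderiv ℝ (fun y => φ (y, b)) z w⟫
        - ⟪momentum L (fun τ => φ (z, τ)) a, fderiv ℝ (fun y => φ (y, a)) z w⟫
        - ∫ t in a..b, ⟪f t, fderiv ℝ (fun y => φ (y, t)) z w⟫ := by
  have dL_cont :
      Continuous fun t => fderiv ℝ (fun y => L (φ (y, t), deriv (fun τ => φ (y, τ)) t)) z :=
    continuous_fderiv_comp_prodMk_left
      (contDiff_lagrangian_family (hL.of_le one_le_two) hφ (by norm_num)) z
  have dφ_cont : Continuous fun t => fderiv ℝ (fun y => φ (y, t)) z :=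
    continuous_fderiv_comp_prodMk_left (hφ.of_le one_le_two) z
  have dL_integrable := (dL_cont.clm_apply (continuous_const (y := w))).intervalIntegrable
    (μ := volume) a b
  have work_integrable := (hf.inner (𝕜 := ℝ)
    (dφ_cont.clm_apply (continuous_const (y := w)))).intervalIntegrable (μ := volume) a b
  rw [(hasFDerivAt_action (hL.of_le one_le_two) hφ a b z).fderiv,
    intervalIntegral_apply (dL_cont.intervalIntegrable a b), eq_sub_iff_add_eq,
    ← intervalIntegral.integral_add dL_integrable work_integrable]
  exact intervalIntegral.integral_eq_sub_of_hasDerivAt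
    (fun t ht => hasDerivAt_inner_momentum_fderiv hL hφ hz ht w)
    (dL_integrable.add work_integrable)

end NormedSpace

variable [InnerProductSpace ℝ E] [CompleteSpace E]

theorem inner_intervalIntegral_adjoint_apply {A : ℝ → E →L[ℝ] F} (hA : Continuous A)
    (hf : Continuous f) (a b : ℝ) (w : E) :
    ⟪∫ t in a..b, adjoint (A t) (f t), w⟫ = ∫ t in a..b, ⟪f t, A t w⟫ := by
  have integrand_cont : Continuous fun t => adjoint (A t) (f t) :=
    (adjoint.continuous.comp hA).clm_apply hf
  rw [real_inner_comm, ← innerSL_apply_apply ℝ,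
    ← (innerSL ℝ w).intervalIntegral_comp_comm (integrand_cont.intervalIntegrable a b)]
  exact intervalIntegral.integral_congr fun t _ =>
    (real_inner_comm _ _).trans (adjoint_inner_left (A t) w (f t))

theorem hasGradientAt_action (hL : ContDiff ℝ 2 L) (hφ : ContDiff ℝ 2 φ) (hf : Continuous f)
    (hz : IsForcedMotionOn L f (fun τ => φ (z, τ)) (uIcc a b)) :
    HasGradientAt (fun y => action L a b fun τ => φ (y, τ))
      (adjoint (fderiv ℝ (fun y => φ (y, b)) z) (momentum L (fun τ => φ (z, τ)) b)
        - adjoint (fderiv ℝ (fun y => φ (y, a)) z) (momentum L (fun τ => φ (z, τ)) a)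
        - ∫ t in a..b, adjoint (fderiv ℝ (fun y => φ (y, t)) z) (f t)) z := by
  have dφ_cont : Continuous fun t => fderiv ℝ (fun y => φ (y, t)) z :=
    continuous_fderiv_comp_prodMk_left (hφ.of_le one_le_two) z
  have action_diff := (hasFDerivAt_action (hL.of_le one_le_two) hφ a b z).differentiableAt
  convert action_diff.hasGradientAt using 1
  refine ext_inner_right ℝ fun w => ?_
  rw [inner_gradient_left, fderiv_action_apply hL hφ hf hz, inner_sub_left, inner_sub_left,
    adjoint_inner_left, adjoint_inner_left, inner_intervalIntegral_adjoint_apply dφ_cont hf]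

end FirstVariation

theorem stmt_8_general {U : Type*} [TopologicalSpace U] {h : ℝ} (hL : ContDiff ℝ 2 L)
    {fL : F × F × U → F} (hfL : Continuous fL) {u : ℝ → U} (hu : Continuous u)
    {V : Set (F × F)} (hV : IsOpen V) {Q : (F × F) × ℝ → F} (hQ : ContDiff ℝ 2 Q)
    (hQ_zero : ∀ x ∈ V, Q (x, 0) = x.1) (hQ_h : ∀ x ∈ V, Q (x, h) = x.2)
    (hEL : ∀ x ∈ V, IsForcedMotionOn L (fun t => fL (Q (x, t), deriv (fun τ => Q (x, τ)) t, u t))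
      (fun τ => Q (x, τ)) (uIcc 0 h))
    {LdE : F × F → ℝ} (hLdE : ∀ x, LdE x = action L 0 h fun τ => Q (x, τ))
    {fdEp : F × F → F}
    (hfdEp : ∀ x : F × F, fdEp x = ∫ t in (0 : ℝ)..h,
      adjoint (fderiv ℝ (fun b => Q ((x.1, b), t)) x.2)
        (fL (Q (x, t), deriv (fun τ => Q (x, τ)) t, u t)))
    {x : F × F} (hx : x ∈ V) :
    HasGradientAt (fun b => LdE (x.1, b)) (momentum L (fun τ => Q (x, τ)) h - fdEp x) x.2 := by
  have near : ∀ᶠ b in 𝓝 x.2, (x.1, b) ∈ V :=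
    (Continuous.prodMk_right x.1).continuousAt.eventually (hV.mem_nhds hx)
  have fderiv_initial : fderiv ℝ (fun b => Q ((x.1, b), 0)) x.2 = 0 := by
    have const : (fun b => Q ((x.1, b), 0)) =ᶠ[𝓝 x.2] fun _ => x.1 :=
      near.mono fun b hb => hQ_zero _ hb
    rw [const.fderiv_eq, fderiv_fun_const, Pi.zero_apply]
  have fderiv_final : fderiv ℝ (fun b => Q ((x.1, b), h)) x.2 = .id ℝ F := by
    have ident : (fun b => Q ((x.1, b), h)) =ᶠ[𝓝 x.2] id := near.mono fun b hb => hQ_h _ hb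
    rw [ident.fderiv_eq, fderiv_id]
  have velocity_cont : Continuous (deriv fun τ => Q (x, τ)) :=
    (hQ.comp (contDiff_prodMk_right x)).continuous_deriv (by norm_num)
  have force_cont : Continuous fun t => fL (Q (x, t), deriv (fun τ => Q (x, τ)) t, u t) :=
    hfL.comp ((hQ.continuous.comp (.prodMk_right x)).prodMk (velocity_cont.prodMk hu))
  have first_variation := hasGradientAt_action (φ := fun p : F × ℝ => Q ((x.1, p.1), p.2)) hL
    (hQ.comp (by fun_prop)) force_cont (hEL x hx)
  simpa [fderiv_initial, fderiv_final, hLdE, hfdEp, adjoint_id] using first_variation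

end Mechanics

/-- The exact forced discrete Legendre transform `𝔽^{f+}L_d^E` agrees with the
continuous Legendre transform `𝔽L` at the final point of the solution
curve. -/
theorem stmt_8 {n m : ℕ} (h : ℝ) (hh : 0 < h)
    (L : Evec n × Evec n → ℝ) (hL : ContDiff ℝ 2 L)
    (fL : Evec n × Evec n × Evec m → Evec n) (hfL : Continuous fL)
    (u : ℝ → Evec m) (hu : Continuous u)
    (V : Set (Evec n × Evec n)) (hV : IsOpen V)
    (Qf : (Evec n × Evec n) × ℝ → Evec n) (hQf : ContDiff ℝ 2 Qf)
    (hbd0 : ∀ x ∈ V, Qf (x, 0) = x.1)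
    (hbdh : ∀ x ∈ V, Qf (x, h) = x.2)
    (hEL : ∀ x ∈ V, ∀ t ∈ Set.Icc (0:ℝ) h,
      gradient (fun y => L (y, deriv (fun τ => Qf (x, τ)) t)) (Qf (x, t))
        - deriv (fun σ => gradient (fun v => L (Qf (x, σ), v))
            (deriv (fun τ => Qf (x, τ)) σ)) t
        + fL (Qf (x, t), deriv (fun τ => Qf (x, τ)) t, u t) = 0)
    (LdE : Evec n × Evec n → ℝ)
    (hLdE : ∀ x, LdE x = ∫ t in (0:ℝ)..h, L (Qf (x, t), deriv (fun τ => Qf (x, τ)) t))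
    (fdEp : Evec n × Evec n → Evec n)
    (hfdEp : ∀ x : Evec n × Evec n, fdEp x = ∫ t in (0:ℝ)..h,
      (ContinuousLinearMap.adjoint (fderiv ℝ (fun b => Qf ((x.1, b), t)) x.2))
        (fL (Qf (x, t), deriv (fun τ => Qf (x, τ)) t, u t))) :
    ∀ x ∈ V,
      gradient (fun b => LdE (x.1, b)) x.2 + fdEp x
        = gradient (fun v => L (Qf (x, h), v)) (deriv (fun τ => Qf (x, τ)) h) :=
  fun _ hx => eq_sub_iff_add_eq.mp (stmt_8_general hL hfL hu hV hQf hbd0 hbdh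
    (Set.uIcc_of_le hh.le ▸ hEL) hLdE hfdEp hx).gradient
end
end
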